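/- Let L be a non-degenerate real random variable with M_L(t) = E[e^{tL}] < ∞ for all t ≥ 0, and let ε ≥ 0 satisfy ε < ess sup L. Then there exists a unique t₀ > 0 solving the saddle-point equation K_L'(t₀) = ε + 1/t₀ + 1/(t₀+1); equivalently, t₀ is the unique minimizer over (0,∞) of the strictly convex function F_ε(t) = K_L(t) − tε − log t − log(1+t). -/

import Mathlib

open MeasureTheory Real

/-!
Convexity of `K` and strict concavity of `log` make `F_ε` strictly convex, and the saddle-point
equation says exactly that `F_ε' = 0`, so its solutions are the minimizers of `F_ε`, of which there
is at most one. One exists because `F_ε` is coercive on `(0, ∞)`: at `0` the term `-log t` blows up,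
while at `∞` the exponential Chebyshev inequality `log μ(L ≥ a) + t * a ≤ K t`, used for some
`a > ε` with `μ(L ≥ a) > 0`, makes `K t - t * ε` grow linearly and beat both logarithms.
-/

open Set Filter Topology ProbabilityTheory

section Minimizers

lemma exists_isMinOn_Ioi_of_tendsto_atTop {α β : Type*} [ConditionallyCompleteLinearOrder α]
    [TopologicalSpace α] [OrderTopology α] [NoMaxOrder α] [LinearOrder β] [TopologicalSpace β]
    [ClosedIicTopology β] {f : α → β} {a : α} (hf : ContinuousOn f (Ioi a))
    (hleft : Tendsto f (𝓝[>] a) atTop) (hright : Tendsto f atTop atTop) :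
    ∃ x ∈ Ioi a, IsMinOn f (Ioi a) x := by
  obtain ⟨y, hy⟩ := exists_gt a
  obtain ⟨l, hl, hleft_ge⟩ :=
    (mem_nhdsGT_iff_exists_Ioo_subset' hy).1 (hleft.eventually_ge_atTop (f y))
  obtain ⟨u, hright_ge⟩ := eventually_atTop.1 (hright.eventually_ge_atTop (f y))
  have hsub : Icc (min l y) (max u y) ⊆ Ioi a := fun x hx ↦ (lt_min hl hy).trans_le hx.1
  have hy_mem : y ∈ Icc (min l y) (max u y) := ⟨min_le_right _ _, le_max_right _ _⟩
  obtain ⟨x, hx, hmin⟩ := isCompact_Icc.exists_isMinOn ⟨y, hy_mem⟩ (hf.mono hsub)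
  refine ⟨x, hsub hx, fun z hz ↦ ?_⟩
  by_cases hz_mem : z ∈ Icc (min l y) (max u y)
  · exact hmin hz_mem
  · refine (hmin hy_mem : f x ≤ f y).trans ?_
    rcases not_and_or.1 hz_mem with hzl | hzu
    · exact hleft_ge ⟨hz, (not_le.1 hzl).trans_le (min_le_left _ _)⟩
    · exact hright_ge z ((le_max_left _ _).trans (not_le.1 hzu).le)

lemma lt_of_isMinOn_of_strictConvexOn {𝕜 E β : Type*} [Field 𝕜] [LinearOrder 𝕜]
    [IsStrictOrderedRing 𝕜] [AddCommMonoid E] [SMul 𝕜 E] [AddCommMonoid β] [PartialOrder β]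
    [IsOrderedAddMonoid β] [Module 𝕜 β] [PosSMulMono 𝕜 β] {s : Set E} {f : E → β}
    {x y : E} (hf : StrictConvexOn 𝕜 s f) (hmin : IsMinOn f s x) (hx : x ∈ s) (hy : y ∈ s)
    (hne : y ≠ x) : f x < f y := by
  refine (hmin hy).lt_of_ne fun heq ↦ hne ?_
  exact hf.eq_of_isMinOn (fun z hz ↦ heq.symm.trans_le (hmin hz)) hmin hy hx

lemma isMinOn_iff_deriv_eq_zero_of_convexOn {s : Set ℝ} {f : ℝ → ℝ} {x : ℝ} (hf : ConvexOn ℝ s f)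
    (hs : s ∈ 𝓝 x) (hfx : DifferentiableAt ℝ f x) : IsMinOn f s x ↔ deriv f x = 0 := by
  refine ⟨fun hmin ↦ (hmin.isLocalMin hs).deriv_eq_zero,
    fun hderiv ↦ hf.isMinOn_of_rightDeriv_eq_zero (mem_interior_iff_mem_nhds.2 hs) ?_⟩
  rw [hfx.derivWithin (uniqueDiffWithinAt_Ioi x), hderiv]

end Minimizers

/-- The function `F_ε` of the saddle-point approximation, for an arbitrary function `K` in the role
of the cumulant generating function; it is meaningful for `t > 0` only. -/
noncomputable def saddleObjective (K : ℝ → ℝ) (ε t : ℝ) : ℝ :=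
  K t - t * ε - log t - log (1 + t)

section SaddleObjective

variable {K : ℝ → ℝ} {ε : ℝ}

lemma strictConvexOn_saddleObjective (hK : ConvexOn ℝ (Ioi 0) K) :
    StrictConvexOn ℝ (Ioi 0) (saddleObjective K ε) := by
  have hlinear : ConcaveOn ℝ (Ioi 0) fun t ↦ t * ε :=
    (LinearMap.mulRight ℝ ε).concaveOn (convex_Ioi 0)
  have hlog_shift : ConcaveOn ℝ (Ioi 0) fun t ↦ log (1 + t) :=
    (strictConcaveOn_log_Ioi.concaveOn.translate_right 1).subset
      (fun t ht ↦ add_pos one_pos (mem_Ioi.1 ht)) (convex_Ioi 0)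
  exact ((hK.sub hlinear).sub_strictConcaveOn strictConcaveOn_log_Ioi).sub_concaveOn hlog_shift

lemma hasDerivAt_saddleObjective {K' t : ℝ} (hK : HasDerivAt K K' t) (ht : 0 < t) :
    HasDerivAt (saddleObjective K ε) (K' - (ε + 1 / t + 1 / (t + 1))) t := by
  have hlog_shift : HasDerivAt (fun s : ℝ ↦ log (1 + s)) (1 / (1 + t)) t :=
    ((hasDerivAt_id t).const_add 1).log (add_pos one_pos ht).ne'
  refine (((hK.sub (hasDerivAt_mul_const ε)).sub (hasDerivAt_log ht.ne')).sub
    hlog_shift).congr_deriv ?_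
  rw [one_div t, add_comm t 1]
  ring

lemma tendsto_saddleObjective_nhdsGT_zero {a b : ℝ} (hK : ∀ t, 0 < t → b + t * a ≤ K t) :
    Tendsto (saddleObjective K ε) (𝓝[>] 0) atTop := by
  have hcont : ContinuousAt (fun t : ℝ ↦ b + t * a - t * ε - log (1 + t)) 0 := by
    fun_prop (disch := norm_num)
  refine tendsto_atTop_mono' _ ?_ ((hcont.tendsto.mono_left nhdsWithin_le_nhds).add_atTop
    (tendsto_neg_atBot_atTop.comp tendsto_log_nhdsGT_zero))
  filter_upwards [self_mem_nhdsWithin] with t ht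
  simp only [saddleObjective, Function.comp_apply]
  linarith [hK t ht]

lemma tendsto_saddleObjective_atTop {a b : ℝ} (hε : ε < a) (hK : ∀ t, 0 < t → b + t * a ≤ K t) :
    Tendsto (saddleObjective K ε) atTop atTop := by
  have hslope : 0 < (a - ε) / 4 := by linarith
  have hlinear : Tendsto (fun t ↦ b - log 2 + (a - ε) / 2 * t) atTop atTop :=
    tendsto_atTop_add_const_left _ _ (tendsto_id.const_mul_atTop (by linarith))
  refine tendsto_atTop_mono' _ ?_ hlinear
  filter_upwards [isLittleO_log_id_atTop.bound hslope, eventually_ge_atTop 1] with t hlog ht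
  have ht_pos : 0 < t := one_pos.trans_le ht
  have hlog_le : log t ≤ (a - ε) / 4 * t := by
    simpa [abs_of_pos ht_pos] using (le_abs_self _).trans hlog
  have hlog_shift_le : log (1 + t) ≤ log 2 + log t := by
    rw [← log_mul two_ne_zero ht_pos.ne']
    exact log_le_log (by linarith) (by linarith)
  simp only [saddleObjective]
  linarith [hK t ht_pos]

theorem exists_saddlePoint_of_convexOn {a b : ℝ} (hconv : ConvexOn ℝ (Ioi 0) K)
    (hdiff : ∀ t, 0 < t → DifferentiableAt ℝ K t) (hε : ε < a)
    (hK : ∀ t, 0 < t → b + t * a ≤ K t) :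
    ∃ t₀, 0 < t₀ ∧ (∀ t, 0 < t → (deriv K t = ε + 1 / t + 1 / (t + 1) ↔ t = t₀)) ∧
      ∀ t, 0 < t → t ≠ t₀ → saddleObjective K ε t₀ < saddleObjective K ε t := by
  have hF : StrictConvexOn ℝ (Ioi 0) (saddleObjective K ε) := strictConvexOn_saddleObjective hconv
  have hF' (t : ℝ) (ht : 0 < t) := hasDerivAt_saddleObjective (ε := ε) (hdiff t ht).hasDerivAt ht
  have hcont : ContinuousOn (saddleObjective K ε) (Ioi 0) := fun t ht ↦
    (hF' t ht).continuousAt.continuousWithinAt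
  obtain ⟨t₀, ht₀, hmin⟩ := exists_isMinOn_Ioi_of_tendsto_atTop hcont
    (tendsto_saddleObjective_nhdsGT_zero hK) (tendsto_saddleObjective_atTop hε hK)
  refine ⟨t₀, ht₀, fun t ht ↦ ?_, fun t ht ↦ lt_of_isMinOn_of_strictConvexOn hF hmin ht₀ ht⟩
  calc deriv K t = ε + 1 / t + 1 / (t + 1)
      ↔ deriv (saddleObjective K ε) t = 0 := by rw [(hF' t ht).deriv, sub_eq_zero]
    _ ↔ IsMinOn (saddleObjective K ε) (Ioi 0) t :=
      (isMinOn_iff_deriv_eq_zero_of_convexOn hF.convexOn (Ioi_mem_nhds ht)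
        (hF' t ht).differentiableAt).symm
    _ ↔ t = t₀ := ⟨fun h ↦ hF.eq_of_isMinOn h hmin ht ht₀, fun h ↦ h ▸ hmin⟩

end SaddleObjective

section CumulantGeneratingFunction

variable {Ω : Type*} [MeasurableSpace Ω] {μ : Measure Ω}

lemma convexOn_cgf {X : Ω → ℝ} : ConvexOn ℝ (interior (integrableExpSet X μ)) (cgf X μ) := by
  refine convexOn_of_deriv2_nonneg' convex_integrableExpSet.interior
    (fun t ht ↦ (analyticAt_cgf ht).differentiableAt.differentiableWithinAt)
    (fun t ht ↦ (analyticAt_cgf ht).deriv.differentiableAt.differentiableWithinAt)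
    (fun t ht ↦ ?_)
  rw [← iteratedDeriv_eq_iterate, ← variance_tilted_mul ht]
  exact variance_nonneg _ _

lemma exists_gt_measure_le_ne_zero {α : Type*} [LinearOrder α] [TopologicalSpace α]
    [OrderTopology α] [DenselyOrdered α] [NoMaxOrder α] [FirstCountableTopology α] {X : Ω → α}
    {c : α} (h : μ {ω | c < X ω} ≠ 0) : ∃ a > c, μ {ω | a ≤ X ω} ≠ 0 := by
  obtain ⟨u, -, hu_gt, hu_lim⟩ := exists_seq_strictAnti_tendsto c
  have hcover : {ω | c < X ω} ⊆ ⋃ n, {ω | u n ≤ X ω} := fun ω hω ↦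
    let ⟨n, hn⟩ := (hu_lim.eventually_lt_const hω).exists
    mem_iUnion.2 ⟨n, hn.le⟩
  obtain ⟨n, hn⟩ := exists_measure_pos_of_not_measure_iUnion_null
    fun h_null ↦ h (measure_mono_null hcover h_null)
  exact ⟨u n, hu_gt n, hn.ne'⟩

lemma log_measureReal_add_mul_le_cgf {X : Ω → ℝ} {a t : ℝ} (ht : 0 ≤ t)
    (hint : Integrable (fun ω ↦ exp (t * X ω)) μ) (ha : μ {ω | a ≤ X ω} ≠ 0) :
    log (μ.real {ω | a ≤ X ω}) + t * a ≤ cgf X μ t := by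
  have hsub : {ω | a ≤ X ω} ⊆ {ω | exp (t * a) ≤ exp (t * X ω)} := fun ω hω ↦
    exp_le_exp.2 (mul_le_mul_of_nonneg_left hω ht)
  have hfin := (hint.measure_ge_lt_top (exp_pos (t * a))).ne
  have hpos : 0 < μ.real {ω | a ≤ X ω} := ENNReal.toReal_pos ha (measure_ne_top_of_subset hsub hfin)
  have hchebyshev : exp (t * a) * μ.real {ω | a ≤ X ω} ≤ mgf X μ t :=
    (mul_le_mul_of_nonneg_left (measureReal_mono hsub hfin) (exp_pos _).le).trans
      (mul_meas_ge_le_integral_of_nonneg (.of_forall fun _ ↦ (exp_pos _).le) hint _)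
  calc log (μ.real {ω | a ≤ X ω}) + t * a
      = log (exp (t * a) * μ.real {ω | a ≤ X ω}) := by
        rw [log_mul (exp_pos _).ne' hpos.ne', log_exp, add_comm]
    _ ≤ cgf X μ t := log_le_log (mul_pos (exp_pos _) hpos) hchebyshev

theorem stmt11_general {L : Ω → ℝ} (hMGF : ∀ t, 0 < t → Integrable (fun ω ↦ exp (t * L ω)) μ)
    {ε : ℝ} (hε : μ {ω | ε < L ω} ≠ 0) :
    StrictConvexOn ℝ (Ioi 0) (saddleObjective (cgf L μ) ε) ∧
    ∃ t₀, 0 < t₀ ∧ (∀ t, 0 < t → (deriv (cgf L μ) t = ε + 1 / t + 1 / (t + 1) ↔ t = t₀)) ∧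
      ∀ t, 0 < t → t ≠ t₀ →
        saddleObjective (cgf L μ) ε t₀ < saddleObjective (cgf L μ) ε t := by
  have hinterior : Ioi 0 ⊆ interior (integrableExpSet L μ) := interior_maximal hMGF isOpen_Ioi
  have hconv : ConvexOn ℝ (Ioi 0) (cgf L μ) := convexOn_cgf.subset hinterior (convex_Ioi 0)
  obtain ⟨a, hεa, ha⟩ := exists_gt_measure_le_ne_zero hε
  exact ⟨strictConvexOn_saddleObjective hconv, exists_saddlePoint_of_convexOn hconv
    (fun t ht ↦ (analyticAt_cgf (hinterior ht)).differentiableAt) hεa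
    (fun t ht ↦ log_measureReal_add_mul_le_cgf ht.le (hMGF t ht) ha)⟩

end CumulantGeneratingFunction

/-- Existence and uniqueness of the saddle point: for a non-degenerate `L` with
everywhere-finite MGF and `0 ≤ ε < ess sup L` (i.e. `μ(L > ε) > 0`), the function
`F_ε(t) = K_L(t) - tε - log t - log(1+t)` is strictly convex on `(0,∞)` and there is a
unique `t₀ > 0` with `K_L'(t₀) = ε + 1/t₀ + 1/(t₀+1)`, which is the unique minimizer
of `F_ε` over `(0,∞)`. -/
theorem stmt11 {Ω : Type*} [MeasurableSpace Ω] (μ : Measure Ω) [IsProbabilityMeasure μ]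
    (L : Ω → ℝ) (hL : Measurable L)
    (hnondeg : ¬ ∃ c : ℝ, ∀ᵐ ω ∂μ, L ω = c)
    (hMGF : ∀ t : ℝ, 0 ≤ t → Integrable (fun ω => Real.exp (t * L ω)) μ)
    (K : ℝ → ℝ) (hK : K = fun t => Real.log (∫ ω, Real.exp (t * L ω) ∂μ))
    (ε : ℝ) (hε : 0 ≤ ε) (hεsup : 0 < μ {ω | ε < L ω})
    (F : ℝ → ℝ) (hF : F = fun t => K t - t * ε - Real.log t - Real.log (1 + t)) :
    StrictConvexOn ℝ (Set.Ioi 0) F ∧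
    ∃! t₀ : ℝ, 0 < t₀ ∧ deriv K t₀ = ε + 1 / t₀ + 1 / (t₀ + 1) ∧
      ∀ t : ℝ, 0 < t → t ≠ t₀ → F t₀ < F t := by
  subst hK hF
  obtain ⟨hconv, t₀, ht₀, hsaddle, hmin⟩ := stmt11_general (fun t ht ↦ hMGF t ht.le) hεsup.ne'
  exact ⟨hconv, t₀, ⟨ht₀, (hsaddle t₀ ht₀).2 rfl, hmin⟩, fun t ht ↦ (hsaddle t ht.1).1 ht.2.1⟩
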